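/- Let n = 2 and consider two cameras A_1, A_2 ∈ ℝ^{3×4}. For any indices j, k ∈ {1,2,3}, there exists a 4×4 minor f of the 6×4 matrix A^F(p) = [[p_1]_× A_1 ; [p_2]_× A_2] (the one obtained by deleting the row of [p_1]_× A_1 not containing p_{1j} and the row of [p_2]_× A_2 not containing p_{2k}) such that f = (−1)^{j+k} p_{1j} p_{2k} · det A(p), where A(p) is the 6×6 matrix [A_1, p_1, 0; A_2, 0, p_2] and p_{i1}=x_i, p_{i2}=y_i, p_{i3}=z_i. -/

import Mathlib

noncomputable section

/-- The polynomial ring `ℂ[x_1,y_1,z_1,x_2,y_2,z_2]` of symbolic image coordinates of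
two cameras: `X (i, j)` is the `j`-th coordinate `p_{ij}` of the image point in camera `i`. -/
abbrev S2 := MvPolynomial (Fin 2 × Fin 3) ℂ

/-- The symbolic image point of camera `i`. -/
def pv (i : Fin 2) : Fin 3 → S2 := fun j => MvPolynomial.X (i, j)

/-- The skew-symmetric cross-product matrix `[v]_×`. -/
def crossMat (v : Fin 3 → S2) : Matrix (Fin 3) (Fin 3) S2 :=
  !![0, -v 2, v 1; v 2, 0, -v 0; -v 1, v 0, 0]

/-- A real camera matrix viewed over the polynomial ring. -/
def camC (A : Matrix (Fin 3) (Fin 4) ℝ) : Matrix (Fin 3) (Fin 4) S2 :=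
  A.map fun a => MvPolynomial.C ((a : ℝ) : ℂ)

/-- The `6 × 4` Faugeras matrix `A^F(p) = [[p_1]_× A_1 ; [p_2]_× A_2]`. -/
def AF (A₁ A₂ : Matrix (Fin 3) (Fin 4) ℝ) : Matrix (Fin 3 ⊕ Fin 3) (Fin 4) S2 :=
  Matrix.fromRows (crossMat (pv 0) * camC A₁) (crossMat (pv 1) * camC A₂)

/-- The `6 × 6` matrix `A(p) = [A_1, p_1, 0; A_2, 0, p_2]`. -/
def Ap (A₁ A₂ : Matrix (Fin 3) (Fin 4) ℝ) : Matrix (Fin 3 ⊕ Fin 3) (Fin 4 ⊕ Fin 2) S2 :=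
  Matrix.of fun r c =>
    match r, c with
    | Sum.inl r', Sum.inl c' => camC A₁ r' c'
    | Sum.inl r', Sum.inr i => if i = 0 then MvPolynomial.X ((0 : Fin 2), r') else 0
    | Sum.inr r', Sum.inl c' => camC A₂ r' c'
    | Sum.inr r', Sum.inr i => if i = 1 then MvPolynomial.X ((1 : Fin 2), r') else 0

/-- Cofactor expansion along the last column. -/
theorem det_snoc {R : Type*} [CommRing R] {n : ℕ} (r : Fin (n + 1) → Fin n → R)
    (c : Fin (n + 1) → R) :
    Matrix.det (Matrix.of fun i => (Fin.snoc (r i) (c i) : Fin (n + 1) → R)) =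
      ∑ i : Fin (n + 1), (-1) ^ ((i : ℕ) + n) * c i *
        Matrix.det (Matrix.of fun s => r (i.succAbove s)) := by
  rw [Matrix.det_succ_column _ (Fin.last n)]
  refine Finset.sum_congr rfl fun i _ => ?_
  have h : (Matrix.of fun i => (Fin.snoc (r i) (c i) : Fin (n + 1) → R)).submatrix
      i.succAbove (Fin.last n).succAbove = Matrix.of fun s => r (i.succAbove s) := by
    ext s t
    simp
  rw [h]
  simp

/-- The case of `5 × 5` matrices, expanded. -/
theorem det_snoc_five {R : Type*} [CommRing R] (r : Fin 5 → Fin 4 → R) (c : Fin 5 → R) :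
    Matrix.det (Matrix.of fun i => (Fin.snoc (r i) (c i) : Fin 5 → R)) =
      c 0 * Matrix.det (Matrix.of ![r 1, r 2, r 3, r 4])
      - c 1 * Matrix.det (Matrix.of ![r 0, r 2, r 3, r 4])
      + c 2 * Matrix.det (Matrix.of ![r 0, r 1, r 3, r 4])
      - c 3 * Matrix.det (Matrix.of ![r 0, r 1, r 2, r 4])
      + c 4 * Matrix.det (Matrix.of ![r 0, r 1, r 2, r 3]) := by
  have h : ∀ (i : Fin 5), (fun s => r (i.succAbove s)) =
      ![r (i.succAbove 0), r (i.succAbove 1), r (i.succAbove 2), r (i.succAbove 3)] := by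
    intro i; ext s t; fin_cases s <;> rfl
  refine (det_snoc (n := 4) r c).trans ((Fin.sum_univ_five _).trans ?_)
  rw [h, h, h, h, h]
  simp [Fin.succAbove]
  ring

/-- The case of `6 × 6` matrices, expanded. -/
theorem det_snoc_six {R : Type*} [CommRing R] (r : Fin 6 → Fin 5 → R) (c : Fin 6 → R) :
    Matrix.det (Matrix.of fun i => (Fin.snoc (r i) (c i) : Fin 6 → R)) =
      - c 0 * Matrix.det (Matrix.of fun s : Fin 5 => r (Fin.succAbove 0 s))
      + c 1 * Matrix.det (Matrix.of fun s : Fin 5 => r (Fin.succAbove 1 s))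
      - c 2 * Matrix.det (Matrix.of fun s : Fin 5 => r (Fin.succAbove 2 s))
      + c 3 * Matrix.det (Matrix.of fun s : Fin 5 => r (Fin.succAbove 3 s))
      - c 4 * Matrix.det (Matrix.of fun s : Fin 5 => r (Fin.succAbove 4 s))
      + c 5 * Matrix.det (Matrix.of fun s : Fin 5 => r (Fin.succAbove 5 s)) := by
  refine (det_snoc (n := 5) r c).trans ((Fin.sum_univ_six _).trans ?_)
  generalize Matrix.det (Matrix.of fun s : Fin 5 => r (Fin.succAbove 0 s)) = d0
  norm_num
  ring

/-- Explicit `4 × 4` determinant. -/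
theorem det_four {R : Type*} [CommRing R] (M : Matrix (Fin 4) (Fin 4) R) :
    M.det =
      M 0 0 * (M 1 1 * (M 2 2 * M 3 3 - M 2 3 * M 3 2) - M 1 2 * (M 2 1 * M 3 3 - M 2 3 * M 3 1)
        + M 1 3 * (M 2 1 * M 3 2 - M 2 2 * M 3 1))
      - M 0 1 * (M 1 0 * (M 2 2 * M 3 3 - M 2 3 * M 3 2) - M 1 2 * (M 2 0 * M 3 3 - M 2 3 * M 3 0)
        + M 1 3 * (M 2 0 * M 3 2 - M 2 2 * M 3 0))
      + M 0 2 * (M 1 0 * (M 2 1 * M 3 3 - M 2 3 * M 3 1) - M 1 1 * (M 2 0 * M 3 3 - M 2 3 * M 3 0)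
        + M 1 3 * (M 2 0 * M 3 1 - M 2 1 * M 3 0))
      - M 0 3 * (M 1 0 * (M 2 1 * M 3 2 - M 2 2 * M 3 1) - M 1 1 * (M 2 0 * M 3 2 - M 2 2 * M 3 0)
        + M 1 2 * (M 2 0 * M 3 1 - M 2 1 * M 3 0)) := by
  simp [Matrix.det_succ_row_zero, Fin.sum_univ_succ, Fin.succAbove]
  ring

/-- The six-by-six matrix, column by column. -/
def sixMat {R : Type*} [CommRing R] (a b : Fin 3 → Fin 4 → R) (u v : Fin 3 → R) :
    Matrix (Fin 6) (Fin 6) R :=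
  Matrix.of fun i => (Fin.snoc (Fin.snoc ((![a 0, a 1, a 2, b 0, b 1, b 2] : Fin 6 → Fin 4 → R) i)
    ((![u 0, u 1, u 2, 0, 0, 0] : Fin 6 → R) i) : Fin 5 → R)
    ((![0, 0, 0, v 0, v 1, v 2] : Fin 6 → R) i) : Fin 6 → R)

/-- The six-by-six determinant, expanded along its last two columns. -/
theorem det_six {R : Type*} [CommRing R] (a b : Fin 3 → Fin 4 → R) (u v : Fin 3 → R) :
    (sixMat a b u v).det =
    ∑ r : Fin 3, ∑ s : Fin 3, (-1) ^ ((r : ℕ) + (s : ℕ)) * u r * v s *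
      Matrix.det (Matrix.of ![a (r.succAbove 0), a (r.succAbove 1),
        b (s.succAbove 0), b (s.succAbove 1)]) := by
  unfold sixMat
  rw [det_snoc_six]
  simp only [det_snoc_five]
  simp only [Fin.sum_univ_three]
  simp [Fin.succAbove]
  ring

/-- The rows of `[u]_× A`, over any commutative ring. -/
def crossRow {R : Type*} [CommRing R] (u : Fin 3 → R) (a : Fin 3 → Fin 4 → R) :
    Fin 3 → Fin 4 → R :=
  ![fun t => u 1 * a 2 t - u 2 * a 1 t, fun t => u 2 * a 0 t - u 0 * a 2 t,
    fun t => u 0 * a 1 t - u 1 * a 0 t]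

/-- Expansion of two cross-product rows in the first two positions. -/
theorem det_cross_top {R : Type*} [CommRing R] (u : Fin 3 → R) (a : Fin 3 → Fin 4 → R)
    (c d : Fin 4 → R) (j : Fin 3) :
    Matrix.det (Matrix.of ![crossRow u a (j.succAbove 0), crossRow u a (j.succAbove 1), c, d]) =
      (-1) ^ (j : ℕ) * u j * ∑ r : Fin 3, (-1) ^ (r : ℕ) * u r *
        Matrix.det (Matrix.of ![a (r.succAbove 0), a (r.succAbove 1), c, d]) := by
  simp only [det_four, Fin.sum_univ_three]
  fin_cases j <;>
  · simp [crossRow, Fin.succAbove]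
    ring

/-- Expansion of two cross-product rows in the last two positions. -/
theorem det_cross_bot {R : Type*} [CommRing R] (u : Fin 3 → R) (a : Fin 3 → Fin 4 → R)
    (c d : Fin 4 → R) (j : Fin 3) :
    Matrix.det (Matrix.of ![c, d, crossRow u a (j.succAbove 0), crossRow u a (j.succAbove 1)]) =
      (-1) ^ (j : ℕ) * u j * ∑ r : Fin 3, (-1) ^ (r : ℕ) * u r *
        Matrix.det (Matrix.of ![c, d, a (r.succAbove 0), a (r.succAbove 1)]) := by
  simp only [det_four, Fin.sum_univ_three]
  fin_cases j <;>
  · simp [crossRow, Fin.succAbove]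
    ring

/-- Both expansions combined. -/
theorem det_cross_both {R : Type*} [CommRing R] (u v : Fin 3 → R) (a b : Fin 3 → Fin 4 → R)
    (j k : Fin 3) :
    Matrix.det (Matrix.of ![crossRow u a (j.succAbove 0), crossRow u a (j.succAbove 1),
        crossRow v b (k.succAbove 0), crossRow v b (k.succAbove 1)]) =
      (-1) ^ ((j : ℕ) + (k : ℕ)) * u j * v k *
        ∑ r : Fin 3, ∑ s : Fin 3, (-1) ^ ((r : ℕ) + (s : ℕ)) * u r * v s *
          Matrix.det (Matrix.of ![a (r.succAbove 0), a (r.succAbove 1),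
            b (s.succAbove 0), b (s.succAbove 1)]) := by
  rw [det_cross_top]
  simp only [det_cross_bot, Finset.mul_sum]
  refine Finset.sum_congr rfl fun r _ => Finset.sum_congr rfl fun s _ => ?_
  ring

/-- The rows of `crossMat u * a` are the `crossRow`s. -/
theorem crossMat_mul (u : Fin 3 → S2) (a : Matrix (Fin 3) (Fin 4) S2) (i : Fin 3) (t : Fin 4) :
    (crossMat u * a) i t = crossRow u a i t := by
  rw [Matrix.mul_apply, Fin.sum_univ_three]
  fin_cases i <;>
  · simp [crossRow, crossMat]
    try ring

/-- The index map deleting row `j` of the first block and row `k` of the second. -/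
def rowSel (j k : Fin 3) : Fin 4 → Fin 3 ⊕ Fin 3 :=
  ![Sum.inl (j.succAbove 0), Sum.inl (j.succAbove 1),
    Sum.inr (k.succAbove 0), Sum.inr (k.succAbove 1)]

/-- For two cameras and any coordinate indices `j, k`, the `4 × 4` minor of `A^F(p)`
obtained by deleting the row of `[p_1]_× A_1` not containing `p_{1j}` (row `j`) and the
row of `[p_2]_× A_2` not containing `p_{2k}` (row `k`) equals
`(−1)^{j+k} p_{1j} p_{2k} · det A(p)`, where `det A(p)` is the bifocal polynomial. -/
theorem faugeras_minor_eq_bifocal (A₁ A₂ : Matrix (Fin 3) (Fin 4) ℝ) (j k : Fin 3) :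
    ∃ f : Fin 4 → Fin 3 ⊕ Fin 3, Function.Injective f ∧
      (∀ r, f r ≠ Sum.inl j ∧ f r ≠ Sum.inr k) ∧
      ((AF A₁ A₂).submatrix f id).det =
        (-1 : S2) ^ ((j : ℕ) + (k : ℕ)) * MvPolynomial.X ((0 : Fin 2), j) *
          MvPolynomial.X ((1 : Fin 2), k) *
          ((Ap A₁ A₂).submatrix (finSumFinEquiv (m := 3) (n := 3)).symm
            (finSumFinEquiv (m := 4) (n := 2)).symm).det := by
  refine ⟨rowSel j k, ?_, ?_, ?_⟩
  · revert j k; unfold rowSel; decide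
  · revert j k; unfold rowSel; decide
  have h6 : (Ap A₁ A₂).submatrix (finSumFinEquiv (m := 3) (n := 3)).symm
            (finSumFinEquiv (m := 4) (n := 2)).symm =
      sixMat (camC A₁) (camC A₂) (pv 0) (pv 1) := by
    ext r c
    fin_cases r <;> fin_cases c <;> rfl
  have hd := congrArg Matrix.det h6
  replace hd := hd.trans (det_six _ _ _ _)
  refine Eq.trans ?_ (congrArg _ hd.symm)
  have hX : ∀ i l, (MvPolynomial.X (i, l) : S2) = pv i l := fun _ _ => rfl
  simp only [hX, AF]
  generalize camC A₁ = a
  generalize camC A₂ = b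
  generalize pv 0 = u
  generalize pv 1 = v
  have hM : (Matrix.fromRows (crossMat u * a) (crossMat v * b)).submatrix (rowSel j k) id =
      Matrix.of ![crossRow u a (j.succAbove 0), crossRow u a (j.succAbove 1),
        crossRow v b (k.succAbove 0), crossRow v b (k.succAbove 1)] := by
    ext1 s t
    fin_cases s <;> exact crossMat_mul _ _ _ _
  rw [hM]
  exact det_cross_both u v a b j k

end
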